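/- Let h : ℝ → ℝ be differentiable, strictly convex, and monotone increasing, let 𝒰 ⊆ ℝ be compact, and let u be an interior point of 𝒰. Then the set { z ∈ [0, ∞) : −h(a) + z·a ≤ −h(u) + z·u for all a ∈ 𝒰 } equals the singleton { h'(u) }. In particular, the minimal incentive-compatible sensitivity θ(u) := min{ z ≥ 0 : u ∈ argmax_{a ∈ 𝒰} (−h(a) + z·a) } exists and equals h'(u). -/

import Mathlib

/-- A differentiable convex function on the line lies above each of its tangent lines. -/
theorem ConvexOn.tangent_line_le {h : ℝ → ℝ} (hconv : ConvexOn ℝ Set.univ h) {u d : ℝ}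
    (hd : HasDerivAt h d u) (a : ℝ) : h u + d * (a - u) ≤ h a := by
  rcases lt_trichotomy a u with hau | rfl | hua
  · have hs := hconv.slope_le_of_hasDerivAt (Set.mem_univ a) (Set.mem_univ u) hau hd
    rw [slope_def_field, div_le_iff₀ (sub_pos.2 hau)] at hs
    linarith
  · simp
  · have hs := hconv.le_slope_of_hasDerivAt (Set.mem_univ u) (Set.mem_univ a) hua hd
    rw [slope_def_field, le_div_iff₀ (sub_pos.2 hua)] at hs
    linarith

/-- The first-order condition: if `u` maximizes `a ↦ -h a + z * a` on a neighbourhood of `u`,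
then `z` is the derivative of `h` at `u`. -/
theorem HasDerivAt.eq_of_isLocalMax_neg_add_mul {h : ℝ → ℝ} {u d z : ℝ} (hd : HasDerivAt h d u)
    (hmax : IsLocalMax (fun a => -h a + z * a) u) : z = d := by
  have hderiv : HasDerivAt (fun a => -h a + z * a) (-d + z * 1) u :=
    hd.fun_neg.add ((hasDerivAt_id u).const_mul z)
  linarith [hmax.hasDerivAt_eq_zero hderiv]

/-- For a differentiable, strictly convex, monotone increasing cost `h` and an
interior point `u` of the compact feasible set `𝒰`, the set of nonnegative
sensitivities making `u` incentive compatible is exactly `{h'(u)}`; in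
particular the minimal incentive-compatible sensitivity `θ(u)` exists and
equals `h'(u)`. -/
theorem stmt_6
    (h : ℝ → ℝ) (hdiff : Differentiable ℝ h)
    (hconv : StrictConvexOn ℝ Set.univ h) (hmono : Monotone h)
    (U : Set ℝ) (hU : IsCompact U) (u : ℝ) (hu : u ∈ interior U) :
    {z : ℝ | 0 ≤ z ∧ ∀ a ∈ U, -h a + z * a ≤ -h u + z * u} = {deriv h u} ∧
      IsLeast {z : ℝ | 0 ≤ z ∧ ∀ a ∈ U, -h a + z * a ≤ -h u + z * u}
        (deriv h u) := by
  have hd : HasDerivAt h (deriv h u) u := (hdiff u).hasDerivAt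
  have hset : {z : ℝ | 0 ≤ z ∧ ∀ a ∈ U, -h a + z * a ≤ -h u + z * u} = {deriv h u} := by
    ext z
    simp only [Set.mem_ofPred_eq, Set.mem_singleton_iff]
    constructor
    · rintro ⟨-, hz⟩
      exact hd.eq_of_isLocalMax_neg_add_mul
        (Filter.mem_of_superset (mem_interior_iff_mem_nhds.1 hu) hz)
    · rintro rfl
      exact ⟨hmono.deriv_nonneg, fun a _ => by linarith [hconv.convexOn.tangent_line_le hd a]⟩
  exact ⟨hset, hset ▸ isLeast_singleton⟩
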